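/- Let V : ℤ → ℝ be p-periodic (p ≥ 1) with Schrödinger operator H. For every μ > 0 there exists M ∈ ℕ such that for every real E with (E : ℂ) ∈ σ(H) and every N ≥ M, one has (1/N)·log‖A_N(E,V)‖ ≤ μ. -/

import Mathlib

open Filter Matrix

/-- The transfer matrix `A_N(E,V) = ∏_{n=1}^N [[E − V(N−n), −1],[1,0]]`,
with the `n = 1` factor leftmost. -/
noncomputable def transferMatrix (V : ℤ → ℝ) (E : ℝ) (N : ℕ) : Matrix (Fin 2) (Fin 2) ℝ :=
  (((List.range N).map
    (fun n => !![E - V ((N : ℤ) - ((n : ℤ) + 1)), -1; (1 : ℝ), 0])).prod)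

/-- Operator norm (Euclidean, i.e. ℓ²→ℓ²) of a 2×2 real matrix. -/
noncomputable def opNorm (A : Matrix (Fin 2) (Fin 2) ℝ) : ℝ :=
  ‖LinearMap.toContinuousLinearMap (Matrix.toEuclideanLin A)‖

/-- `H` is a Schrödinger operator on `ℓ²(ℤ,ℂ)` with potential `V`. -/
def IsSchrodingerOp (V : ℤ → ℝ)
    (H : lp (fun _ : ℤ => ℂ) 2 →L[ℂ] lp (fun _ : ℤ => ℂ) 2) : Prop :=
  ∀ ψ : lp (fun _ : ℤ => ℂ) 2, ∀ n : ℤ,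
    H ψ n = ψ (n + 1) + ψ (n - 1) + (V n : ℂ) * ψ n

/-- `V` is `p`-periodic. -/
def IsPeriodic (V : ℤ → ℝ) (p : ℕ) : Prop :=
  ∀ n : ℤ, V (n + (p : ℤ)) = V n

/-- `V` is limit-periodic: a uniform limit of periodic potentials. -/
def IsLimitPeriodic (V : ℤ → ℝ) : Prop :=
  ∃ (W : ℕ → ℤ → ℝ) (p : ℕ → ℕ),
    (∀ k, 1 ≤ p k ∧ IsPeriodic (W k) (p k)) ∧
    (∀ ε > (0 : ℝ), ∃ K : ℕ, ∀ k ≥ K, ∀ n : ℤ, |V n - W k n| ≤ ε)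

/-- `(1/N)·log‖A_N(E,V)‖`. -/
noncomputable def logNormRate (V : ℤ → ℝ) (E : ℝ) (N : ℕ) : ℝ :=
  (1 / (N : ℝ)) * Real.log (opNorm (transferMatrix V E N))

/-- Individual (upper) Lyapunov exponent `limsup_N (1/N) log‖A_N(E,V)‖`. -/
noncomputable def lyapExp (V : ℤ → ℝ) (E : ℝ) : ℝ :=
  Filter.limsup (fun N : ℕ => logNormRate V E N) Filter.atTop

/-- Bottom of the (real trace of the) spectrum of `H`. -/
noncomputable def specInf (H : lp (fun _ : ℤ => ℂ) 2 →L[ℂ] lp (fun _ : ℤ => ℂ) 2) : ℝ :=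
  sInf {x : ℝ | (x : ℂ) ∈ spectrum ℂ H}

open Polynomial in
/-- Polynomial one-step transfer matrix. -/
noncomputable def stepPoly (V : ℤ → ℝ) (n : ℤ) : Matrix (Fin 2) (Fin 2) ℂ[X] :=
  !![X - C (V n : ℂ), -1; 1, 0]

open Polynomial in
/-- Polynomial transfer matrix started at `n`. -/
noncomputable def transPoly (V : ℤ → ℝ) (n : ℤ) : ℕ → Matrix (Fin 2) (Fin 2) ℂ[X]
  | 0 => 1
  | k + 1 => stepPoly V (n + k) * transPoly V n k

open Polynomial in
noncomputable def pairEval (H : lp (fun _ : ℤ => ℂ) 2 →L[ℂ] lp (fun _ : ℤ => ℂ) 2)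
    (ψ : lp (fun _ : ℤ => ℂ) 2) (n : ℤ) (v : Fin 2 → ℂ[X]) : ℂ :=
  (aeval H (v 0) ψ) n + (aeval H (v 1) ψ) (n - 1)

open Polynomial in
lemma pairEval_succ (V : ℤ → ℝ) (H : lp (fun _ : ℤ => ℂ) 2 →L[ℂ] lp (fun _ : ℤ => ℂ) 2)
    (hH : IsSchrodingerOp V H) (ψ : lp (fun _ : ℤ => ℂ) 2) (n : ℤ) (v : Fin 2 → ℂ[X]) :
    pairEval H ψ (n + 1) v = pairEval H ψ n (v ᵥ* stepPoly V n) := by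
  have h0 : (v ᵥ* stepPoly V n) 0 = (X - C (V n : ℂ)) * v 0 + v 1 := by
    simp [stepPoly, Matrix.vecMul, dotProduct, Fin.sum_univ_two]; ring
  have h1 : (v ᵥ* stepPoly V n) 1 = - v 0 := by
    simp [stepPoly, Matrix.vecMul, dotProduct, Fin.sum_univ_two]
  unfold pairEval
  rw [h0, h1]
  have e1 : aeval H ((X - C (V n : ℂ)) * v 0 + v 1) ψ
      = H (aeval H (v 0) ψ) - (V n : ℂ) • (aeval H (v 0) ψ) + aeval H (v 1) ψ := by
    simp [sub_mul, Algebra.algebraMap_eq_smul_one]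
    rfl
  rw [e1, map_neg]
  have := hH (aeval H (v 0) ψ) n
  simp only [lp.coeFn_add, lp.coeFn_sub, lp.coeFn_smul, Pi.add_apply, Pi.sub_apply, Pi.smul_apply,
    _root_.neg_apply, lp.coeFn_neg, Pi.neg_apply, smul_eq_mul, add_sub_cancel_right, this]
  ring

open Polynomial in
lemma pairEval_add (V : ℤ → ℝ) (H : lp (fun _ : ℤ => ℂ) 2 →L[ℂ] lp (fun _ : ℤ => ℂ) 2)
    (hH : IsSchrodingerOp V H) (ψ : lp (fun _ : ℤ => ℂ) 2) (n : ℤ) (k : ℕ) :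
    ∀ v : Fin 2 → ℂ[X],
    pairEval H ψ (n + k) v = pairEval H ψ n (v ᵥ* transPoly V n k) := by
  induction k with
  | zero => intro v; simp [transPoly]
  | succ k ih =>
    intro v
    have : (n + ((k + 1 : ℕ) : ℤ)) = (n + k) + 1 := by push_cast; ring
    rw [this, pairEval_succ V H hH, ih, transPoly, Matrix.vecMul_vecMul]

lemma stepPoly_periodic {V : ℤ → ℝ} {p : ℕ} (hper : IsPeriodic V p) (n : ℤ) :
    stepPoly V (n + p) = stepPoly V n := by
  unfold stepPoly; rw [hper n]

lemma transPoly_periodic {V : ℤ → ℝ} {p : ℕ} (hper : IsPeriodic V p) (n : ℤ) (k : ℕ) :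
    transPoly V (n + p) k = transPoly V n k := by
  induction k with
  | zero => rfl
  | succ k ih =>
    rw [transPoly, transPoly, ih, ← stepPoly_periodic hper (n + k)]
    congr 2; ring

lemma transPoly_succ' (V : ℤ → ℝ) (n : ℤ) (k : ℕ) :
    transPoly V n (k + 1) = transPoly V (n + 1) k * stepPoly V n := by
  induction k with
  | zero => simp [transPoly]
  | succ k ih =>
    rw [transPoly, ih, transPoly, Matrix.mul_assoc]
    congr 2; push_cast; ring

lemma det_transPoly (V : ℤ → ℝ) (n : ℤ) (k : ℕ) : (transPoly V n k).det = 1 := by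
  induction k with
  | zero => simp [transPoly]
  | succ k ih => rw [transPoly, Matrix.det_mul, ih]; simp [stepPoly, Matrix.det_fin_two]

lemma trace_transPoly_succ {V : ℤ → ℝ} {p : ℕ} (hp : 1 ≤ p) (hper : IsPeriodic V p) (n : ℤ) :
    (transPoly V (n + 1) p).trace = (transPoly V n p).trace := by
  obtain ⟨q, rfl⟩ : ∃ q, p = q + 1 := ⟨p - 1, by omega⟩
  rw [transPoly_succ' V n, Matrix.trace_mul_comm, transPoly, ← stepPoly_periodic hper n]
  congr 3; push_cast; ring

lemma trace_transPoly {V : ℤ → ℝ} {p : ℕ} (hp : 1 ≤ p) (hper : IsPeriodic V p) (n : ℤ) :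
    (transPoly V n p).trace = (transPoly V 0 p).trace := by
  induction n using Int.induction_on with
  | zero => rfl
  | succ i ih => rw [trace_transPoly_succ hp hper, ih]
  | pred i ih => rw [← ih, ← trace_transPoly_succ hp hper]; congr 2; ring

lemma fin2_sq {R : Type*} [CommRing R] (M : Matrix (Fin 2) (Fin 2) R) (h : M.det = 1) :
    M * M = M.trace • M - 1 := by
  rw [Matrix.det_fin_two] at h
  ext i j
  fin_cases i <;> fin_cases j <;>
    simp [Matrix.mul_apply, Fin.sum_univ_two, Matrix.trace] <;> first | linear_combination h | linear_combination -h | ring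

open Polynomial in
lemma magic {V : ℤ → ℝ} {p : ℕ} (hp : 1 ≤ p) (hper : IsPeriodic V p)
    (H : lp (fun _ : ℤ => ℂ) 2 →L[ℂ] lp (fun _ : ℤ => ℂ) 2)
    (hH : IsSchrodingerOp V H) (ψ : lp (fun _ : ℤ => ℂ) 2) (n : ℤ) :
    (aeval H (transPoly V 0 p).trace ψ) n = ψ (n + p) + ψ (n - p) := by
  obtain ⟨m, rfl⟩ : ∃ m : ℤ, n = m + p := ⟨n - p, by ring⟩
  set Δ := (transPoly V 0 p).trace with hΔ
  let v : Fin 2 → ℂ[X] := ![1, 0]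
  have hv : ∀ φ k, pairEval H φ k v = φ k := by intro φ k; simp [pairEval, v]
  have h1 : pairEval H ψ (m + p + p) v = ψ (m + p + p) := hv _ _
  rw [pairEval_add V H hH, transPoly_periodic hper, pairEval_add V H hH, Matrix.vecMul_vecMul,
    fin2_sq _ (det_transPoly V m p), trace_transPoly hp hper, ← hΔ, Matrix.vecMul_sub,
    Matrix.vecMul_smul, Matrix.vecMul_one] at h1
  have h2 : ∀ w w' : Fin 2 → ℂ[X], pairEval H ψ m (Δ • w - w')
      = pairEval H (aeval H Δ ψ) m w - pairEval H ψ m w' := by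
    intro w w'
    have : ∀ q : ℂ[X], aeval H (Δ * q) ψ = aeval H q (aeval H Δ ψ) := by
      intro q; rw [mul_comm, map_mul]; rfl
    simp only [pairEval, Pi.sub_apply, Pi.smul_apply, smul_eq_mul, map_sub,
      _root_.sub_apply, this, lp.coeFn_sub]
    ring
  rw [h2, ← pairEval_add V H hH, hv, hv] at h1
  rw [← h1]; simp

lemma shift_bound (ψ φ : lp (fun _ : ℤ => ℂ) 2) (p : ℤ) (h : ∀ n, φ n = ψ (n + p) + ψ (n - p)) :
    ‖φ‖ ≤ 2 * ‖ψ‖ := by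
  have key : ∀ q : ℤ, ∃ χ : lp (fun _ : ℤ => ℂ) 2, (∀ n, χ n = ψ (n + q)) ∧ ‖χ‖ = ‖ψ‖ := by
    intro q
    have hs := (lp.memℓp ψ).summable (by norm_num)
    have hm : Memℓp (fun n : ℤ => (ψ (n + q) : ℂ)) 2 := by
      apply memℓp_gen
      exact (Equiv.addRight q).summable_iff.mpr hs
    refine ⟨⟨_, hm⟩, fun n => rfl, ?_⟩
    rw [lp.norm_eq_tsum_rpow (by norm_num), lp.norm_eq_tsum_rpow (by norm_num)]
    congr 1
    exact (Equiv.addRight q).tsum_eq (fun n : ℤ => ‖ψ n‖ ^ (ENNReal.toReal 2))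
  obtain ⟨a, ha, ha'⟩ := key p
  obtain ⟨b, hb, hb'⟩ := key (-p)
  have : φ = a + b := by
    ext n; rw [h n]; simp [ha, hb, sub_eq_add_neg]
  rw [this]
  linarith [norm_add_le a b]

lemma transferMatrix_eq (V : ℤ → ℝ) (E : ℝ) (N : ℕ) : transferMatrix V E N =
    ((List.range N).map
      (fun n : ℕ => !![E - V ((N : ℤ) - ((n : ℤ) + 1)), -1; (1 : ℝ), 0])).prod := by
  have h : ∀ l : List ℕ, (do let a ← l; pure (a : ℤ) : List ℤ) = l.map (fun a : ℕ => (a : ℤ)) := by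
    intro l
    induction l with
    | nil => rfl
    | cons a l ih => simpa using ih
  unfold transferMatrix
  rw [h, List.map_map]
  rfl

lemma transferMatrix_succ (V : ℤ → ℝ) (E : ℝ) (N : ℕ) :
    transferMatrix V E (N + 1) = !![E - V N, -1; (1 : ℝ), 0] * transferMatrix V E N := by
  rw [transferMatrix_eq, transferMatrix_eq, List.range_succ_eq_map, List.map_cons, List.prod_cons,
    List.map_map]
  congr 1
  · simp
  · congr 2
    funext n
    have : ((N + 1 : ℕ) : ℤ) - (((Nat.succ n : ℕ) : ℤ) + 1) = (N : ℤ) - ((n : ℤ) + 1) := by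
      push_cast; ring
    simp only [Function.comp, this]

lemma transferMatrix_zero (V : ℤ → ℝ) (E : ℝ) : transferMatrix V E 0 = 1 := by
  simp [transferMatrix]

lemma map_transPoly (V : ℤ → ℝ) (E : ℝ) (k : ℕ) :
    (Polynomial.evalRingHom (E : ℂ)).mapMatrix (transPoly V 0 k)
      = Complex.ofRealHom.mapMatrix (transferMatrix V E k) := by
  induction k with
  | zero => rw [transPoly, transferMatrix_zero, map_one, map_one]
  | succ k ih =>
    rw [transPoly, transferMatrix_succ, map_mul, map_mul, ih]
    congr 1
    ext i j
    fin_cases i <;> fin_cases j <;> simp [stepPoly]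

lemma trace_bound {V : ℤ → ℝ} {p : ℕ} (hp : 1 ≤ p) (hper : IsPeriodic V p)
    (H : lp (fun _ : ℤ => ℂ) 2 →L[ℂ] lp (fun _ : ℤ => ℂ) 2)
    (hH : IsSchrodingerOp V H) (E : ℝ) (hE : (E : ℂ) ∈ spectrum ℂ H) :
    |(transferMatrix V E p).trace| ≤ 2 := by
  have h1 := spectrum.subset_polynomial_aeval H (transPoly V 0 p).trace ⟨_, hE, rfl⟩
  have h2 := spectrum.norm_le_norm_mul_of_mem h1
  have h3 : ‖Polynomial.aeval H (transPoly V 0 p).trace‖ ≤ 2 :=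
    ContinuousLinearMap.opNorm_le_bound _ (by norm_num) fun ψ =>
      shift_bound ψ _ p (magic hp hper H hH ψ)
  have h4 : ‖(1 : lp (fun _ : ℤ => ℂ) 2 →L[ℂ] lp (fun _ : ℤ => ℂ) 2)‖ ≤ 1 :=
    ContinuousLinearMap.norm_id_le
  have h5 : Polynomial.eval (E : ℂ) (transPoly V 0 p).trace
      = ((transferMatrix V E p).trace : ℂ) := by
    have := congrArg Matrix.trace (map_transPoly V E p)
    simpa [Matrix.trace, Fin.sum_univ_two] using this
  simp only [h5, Complex.norm_real, Real.norm_eq_abs] at h2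
  nlinarith [norm_nonneg (Polynomial.aeval H (transPoly V 0 p).trace),
    norm_nonneg (1 : lp (fun _ : ℤ => ℂ) 2 →L[ℂ] lp (fun _ : ℤ => ℂ) 2)]

lemma det_transferMatrix (V : ℤ → ℝ) (E : ℝ) (k : ℕ) : (transferMatrix V E k).det = 1 := by
  induction k with
  | zero => simp [transferMatrix_zero]
  | succ k ih => rw [transferMatrix_succ, Matrix.det_mul, ih]; simp [Matrix.det_fin_two]

lemma transferMatrix_add {V : ℤ → ℝ} {p : ℕ} (hper : IsPeriodic V p) (E : ℝ) (m k : ℕ) :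
    transferMatrix V E (m + k * p) = transferMatrix V E m * transferMatrix V E p ^ k := by
  have h1 : ∀ m : ℕ, transferMatrix V E (m + p) = transferMatrix V E m * transferMatrix V E p := by
    intro m
    induction m with
    | zero => simp [transferMatrix_zero]
    | succ m ih =>
      have : m + 1 + p = (m + p) + 1 := by ring
      rw [this, transferMatrix_succ, transferMatrix_succ, ih, Matrix.mul_assoc]
      push_cast
      rw [hper m]
  induction k with
  | zero => simp
  | succ k ih =>
    have : m + (k + 1) * p = (m + k * p) + p := by ring
    rw [this, h1, ih, pow_succ, Matrix.mul_assoc]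

lemma pow_entry_bound (M : Matrix (Fin 2) (Fin 2) ℝ) (hd : M.det = 1) (ht : |M.trace| ≤ 2)
    (C : ℝ) (hC : ∀ i j, |M i j| ≤ C) (k : ℕ) (i j : Fin 2) :
    |(M ^ k) i j| ≤ 1 + k * (C + 1) := by
  obtain ⟨ht1, ht2⟩ := abs_le.mp ht
  set t := M.trace with htt
  have hs : Real.sqrt (1 - (t/2)^2) ^ 2 = 1 - (t/2)^2 := Real.sq_sqrt (by nlinarith)
  set s := Real.sqrt (1 - (t/2)^2)
  let z : ℂ := ⟨t/2, s⟩
  let w : ℂ := ⟨t/2, -s⟩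
  have hz : ‖z‖ = 1 := by
    rw [← sq_eq_sq₀ (norm_nonneg _) zero_le_one, ← Complex.normSq_eq_norm_sq, Complex.normSq_mk]
    nlinarith
  have hw : ‖w‖ = 1 := by
    rw [← sq_eq_sq₀ (norm_nonneg _) zero_le_one, ← Complex.normSq_eq_norm_sq, Complex.normSq_mk]
    nlinarith
  have hzw : z * w = 1 := by
    apply Complex.ext <;> simp [z, w] <;> nlinarith
  have hsum : z + w = (t : ℂ) := by
    apply Complex.ext <;> simp [z, w]
  have hone : ∀ i j : Fin 2, ‖((1 : Matrix (Fin 2) (Fin 2) ℝ) i j : ℂ)‖ ≤ 1 := by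
    intro i j; fin_cases i <;> fin_cases j <;> simp
  have hrec : ∀ k : ℕ, ((M ^ (k+1)) i j : ℂ) = z * ((M ^ k) i j : ℂ)
      + w ^ k * ((M i j : ℂ) - z * ((1 : Matrix (Fin 2) (Fin 2) ℝ) i j : ℂ)) := by
    intro k
    induction k with
    | zero => simp
    | succ k ih =>
      have h1 : M ^ (k + 1 + 1) = t • M ^ (k+1) - M ^ k := by
        rw [pow_succ, pow_succ, Matrix.mul_assoc, fin2_sq M hd, Matrix.mul_sub, Matrix.mul_smul,
          Matrix.mul_one]
      rw [h1]
      simp only [Matrix.sub_apply, Matrix.smul_apply, smul_eq_mul]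
      push_cast
      rw [← hsum]
      linear_combination w * ih + ((M ^ k) i j : ℂ) * hzw
  have hmain : ‖((M ^ k) i j : ℂ)‖ ≤ 1 + k * (C + 1) := by
    induction k with
    | zero => simpa using hone i j
    | succ k ih =>
      rw [hrec]
      have a1 : ‖(M i j : ℂ)‖ ≤ C := by simpa using hC i j
      have a2 : ‖(M i j : ℂ) - z * ((1 : Matrix (Fin 2) (Fin 2) ℝ) i j : ℂ)‖ ≤ C + 1 := by
        refine (norm_sub_le _ _).trans ?_
        rw [norm_mul, hz, one_mul]
        linarith [hone i j]
      refine (norm_add_le _ _).trans ?_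
      rw [norm_mul, norm_mul, norm_pow, hz, hw, one_pow, one_mul, one_mul]
      push_cast
      linarith
  simpa using hmain

lemma mul_entry_bound (A B : Matrix (Fin 2) (Fin 2) ℝ) (a b : ℝ) (ha : ∀ i j, |A i j| ≤ a)
    (hb : ∀ i j, |B i j| ≤ b) (i j : Fin 2) : |(A * B) i j| ≤ 2 * a * b := by
  have a0 : 0 ≤ a := (abs_nonneg _).trans (ha 0 0)
  rw [Matrix.mul_apply, Fin.sum_univ_two]
  refine (abs_add_le _ _).trans ?_
  rw [abs_mul, abs_mul]
  have h1 := mul_le_mul (ha i 0) (hb 0 j) (abs_nonneg _) a0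
  have h2 := mul_le_mul (ha i 1) (hb 1 j) (abs_nonneg _) a0
  linarith

lemma transfer_entry_bound (V : ℤ → ℝ) (E K : ℝ) (hK : 1 ≤ K) (hV : ∀ n : ℕ, |E - V n| ≤ K)
    (N : ℕ) (i j : Fin 2) : |transferMatrix V E N i j| ≤ (2 * K) ^ N := by
  induction N generalizing i j with
  | zero => rw [transferMatrix_zero]; fin_cases i <;> fin_cases j <;> simp
  | succ N ih =>
    rw [transferMatrix_succ, pow_succ']
    refine mul_entry_bound _ _ K _ ?_ ih i j
    intro i j
    fin_cases i <;> fin_cases j <;> simp [hV, hK]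
    linarith

lemma opNorm_bound (A : Matrix (Fin 2) (Fin 2) ℝ) (a : ℝ) (ha : ∀ i j, |A i j| ≤ a) :
    opNorm A ≤ 4 * a := by
  have a0 : 0 ≤ a := (abs_nonneg _).trans (ha 0 0)
  unfold opNorm
  refine ContinuousLinearMap.opNorm_le_bound _ (by linarith) fun x => ?_
  have hx : ∀ j, |x j| ≤ ‖x‖ := fun j => by simpa using PiLp.norm_apply_le x j
  have hc : ∀ i, |Matrix.toEuclideanLin A x i| ≤ 2 * a * ‖x‖ := by
    intro i
    have : Matrix.toEuclideanLin A x i = A i 0 * x 0 + A i 1 * x 1 := by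
      simp [Matrix.toEuclideanLin, Matrix.mulVec, dotProduct, Fin.sum_univ_two]
    rw [this]
    refine (abs_add_le _ _).trans ?_
    rw [abs_mul, abs_mul]
    have h1 := mul_le_mul (ha i 0) (hx 0) (abs_nonneg _) a0
    have h2 := mul_le_mul (ha i 1) (hx 1) (abs_nonneg _) a0
    linarith
  rw [LinearMap.coe_toContinuousLinearMap']
  rw [EuclideanSpace.norm_eq, Fin.sum_univ_two]
  apply Real.sqrt_le_iff.mpr
  refine ⟨by positivity, ?_⟩
  have q0 := pow_le_pow_left₀ (abs_nonneg _) (hc 0) 2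
  have q1 := pow_le_pow_left₀ (abs_nonneg _) (hc 1) 2
  simp only [Real.norm_eq_abs]
  nlinarith [sq_nonneg (a * ‖x‖)]

lemma periodic_bound {V : ℤ → ℝ} {p : ℕ} (hp : 1 ≤ p) (hper : IsPeriodic V p) :
    ∃ B : ℝ, ∀ n : ℕ, |V n| ≤ B := by
  refine ⟨∑ i ∈ Finset.range p, |V i|, fun n => ?_⟩
  have h : ∀ k r : ℕ, V ((r + k * p : ℕ) : ℤ) = V r := by
    intro k r
    induction k with
    | zero => simp
    | succ k ih => rw [← ih, ← hper ((r + k * p : ℕ) : ℤ)]; congr 1; push_cast; ring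
  have h2 : V n = V (n % p : ℕ) := by
    rw [← h (n / p) (n % p), Nat.mod_add_div']
  rw [h2]
  exact Finset.single_le_sum (f := fun i : ℕ => |V i|) (fun i _ => abs_nonneg _)
    (Finset.mem_range.mpr (Nat.mod_lt _ hp))

/-- for a periodic potential, the normalized transfer-matrix growth is
uniformly small on the spectrum for all large `N`. -/
theorem statement8 (V : ℤ → ℝ) (p : ℕ) (hp : 1 ≤ p) (hper : IsPeriodic V p)
    (H : lp (fun _ : ℤ => ℂ) 2 →L[ℂ] lp (fun _ : ℤ => ℂ) 2)
    (hH : IsSchrodingerOp V H) :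
    ∀ μ : ℝ, 0 < μ → ∃ M : ℕ, ∀ E : ℝ, (E : ℂ) ∈ spectrum ℂ H →
      ∀ N : ℕ, M ≤ N → logNormRate V E N ≤ μ := by
  intro μ hμ
  obtain ⟨B, hB⟩ := periodic_bound hp hper
  have hB0 : 0 ≤ B := (abs_nonneg _).trans (hB 0)
  set K : ℝ := 1 + B + ‖H‖ * ‖(1 : lp (fun _ : ℤ => ℂ) 2 →L[ℂ] lp (fun _ : ℤ => ℂ) 2)‖ with hKd
  have hHn : 0 ≤ ‖H‖ * ‖(1 : lp (fun _ : ℤ => ℂ) 2 →L[ℂ] lp (fun _ : ℤ => ℂ) 2)‖ := by positivity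
  have hK : 1 ≤ K := by linarith
  set C : ℝ := (2 * K) ^ p with hC
  have hC1 : 1 ≤ C := one_le_pow₀ (by linarith)
  set D : ℝ := 8 * C * (C + 1) with hD
  have hD1 : 1 ≤ D := by nlinarith
  refine ⟨⌈4 * D / μ ^ 2⌉₊ + 1, fun E hE N hN => ?_⟩
  have hEb : ∀ n : ℕ, |E - V n| ≤ K := by
    intro n
    have h1 := spectrum.norm_le_norm_mul_of_mem hE
    rw [Complex.norm_real, Real.norm_eq_abs] at h1
    linarith [abs_sub E (V n), hB n]
  have hent := transfer_entry_bound V E K hK hEb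
  have hN1 : (1 : ℝ) ≤ N := by exact_mod_cast (by omega : 1 ≤ N)
  have hNb : 4 * D / μ ^ 2 ≤ N := (Nat.le_ceil _).trans (by exact_mod_cast (by omega))
  have hop : opNorm (transferMatrix V E N) ≤ D * (N + 1) := by
    have e : transferMatrix V E N
        = transferMatrix V E (N % p) * transferMatrix V E p ^ (N / p) := by
      rw [← transferMatrix_add hper, Nat.mod_add_div']
    have b1 : ∀ i j, |transferMatrix V E (N % p) i j| ≤ C := fun i j =>
      (hent _ i j).trans (pow_le_pow_right₀ (by linarith) (Nat.mod_lt _ hp).le)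
    have b2 : ∀ i j, |(transferMatrix V E p ^ (N / p)) i j| ≤ (C + 1) * (N + 1) := by
      intro i j
      refine (pow_entry_bound _ (det_transferMatrix V E p) (trace_bound hp hper H hH E hE) C
        (hent p) (N / p) i j).trans ?_
      have : ((N / p : ℕ) : ℝ) ≤ N := by exact_mod_cast Nat.div_le_self N p
      nlinarith
    have b3 := opNorm_bound _ _ (mul_entry_bound _ _ _ _ b1 b2)
    rw [← e] at b3
    rw [hD]; linarith
  have hexp : D * (N + 1) ≤ Real.exp (μ * N) := by
    have h1 := Real.quadratic_le_exp_of_nonneg (x := μ * N) (by positivity)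
    have h2 : 4 * D ≤ N * μ ^ 2 := (div_le_iff₀ (by positivity)).mp hNb
    have h3 : 0 ≤ μ * N := by positivity
    nlinarith [mul_le_mul_of_nonneg_right h2 (by linarith : (0:ℝ) ≤ N)]
  have hlog : Real.log (opNorm (transferMatrix V E N)) ≤ μ * N := by
    rcases (show 0 ≤ opNorm (transferMatrix V E N) from norm_nonneg _).eq_or_lt with h | h
    · rw [← h, Real.log_zero]; positivity
    · exact (Real.log_le_iff_le_exp h).mpr (hop.trans hexp)
  unfold logNormRate
  rw [one_div, inv_mul_le_iff₀ (by linarith)]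
  linarith
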